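/- Let j ≥ 2. In W = Λ^{2j} ℚ^{4j−1} with the permutation action of S_{4j−1} and the submodule K generated by ρ, define v = (e_1 ∧ e_2 − e_1 ∧ e_3 + e_2 ∧ e_3) ∧ S and w = ∑_{i=1}^{2j−2} (−1)^i e_1 ∧ e_2 ∧ e_3 ∧ S_i. Then (2j−2)·v − 3·w ∈ K. -/

import Mathlib

set_option synthInstance.maxHeartbeats 1000000
set_option maxHeartbeats 1000000

noncomputable section

open ExteriorAlgebra

/-- The standard basis vector `e_{m+1}` of `ℚ^{4j−1}` (with `0`-based index `m`). -/
def ε (j : ℕ) (m : Fin (4*j-1)) : Fin (4*j-1) → ℚ := Pi.single m 1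

/-- The action of `S_N` on the exterior algebra of `ℚ^N` induced by permuting the standard
basis vectors (`g` sends `e_m` to `e_{g m}`). -/
def pact (N : ℕ) (g : Equiv.Perm (Fin N)) :
    ExteriorAlgebra ℚ (Fin N → ℚ) →ₗ[ℚ] ExteriorAlgebra ℚ (Fin N → ℚ) :=
  (ExteriorAlgebra.map (LinearMap.funLeft ℚ ℚ ⇑g⁻¹)).toLinearMap

/-- The element of the `i`-th loop `B_i = {2i+2, 2i+3}` (1-indexed; here `i` is `0`-based)
selected by the Boolean `b`. -/
def idx (j : ℕ) (k : Fin (2*j-2)) (b : Bool) : Fin (4*j-1) :=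
  ⟨2*(k : ℕ) + 3 + b.toNat, by have := Bool.toNat_lt b; omega⟩

/-- `S_I`: the sum, over all choices of one element `s_i ∈ B_i` for each loop `i ∉ I`, of the
wedge products `e_{s_{i_1}} ∧ ⋯ ∧ e_{s_{i_m}}` taken in increasing order of the loop indices
`i ∉ I`. -/
def SI (j : ℕ) (I : Finset (Fin (2*j-2))) : ExteriorAlgebra ℚ (Fin (4*j-1) → ℚ) :=
  ∑ c ∈ Finset.univ.filter (fun c : Fin (2*j-2) → Bool => ∀ i ∈ I, c i = false),
    (List.ofFn fun k : Fin (2*j-2) =>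
      if k ∈ I then 1 else ExteriorAlgebra.ι ℚ (ε j (idx j k (c k)))).prod

/-- The wedge `e_{2j} ∧ e_{2j+1} ∧ ⋯ ∧ e_{4j−1}`. -/
def ρbase (j : ℕ) : ExteriorAlgebra ℚ (Fin (4*j-1) → ℚ) :=
  (List.ofFn fun k : Fin (2*j) =>
    ExteriorAlgebra.ι ℚ (ε j ⟨2*j - 1 + (k : ℕ), by omega⟩)).prod

/-- `ρ = (1 + ∑_{i=1}^{2j−1} (i 2j)) · (e_{2j} ∧ e_{2j+1} ∧ ⋯ ∧ e_{4j−1})`. -/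
def ρElt (j : ℕ) : ExteriorAlgebra ℚ (Fin (4*j-1) → ℚ) :=
  ρbase j + ∑ m : Fin (2*j-1),
    pact (4*j-1) (Equiv.swap (⟨(m : ℕ), by omega⟩ : Fin (4*j-1)) ⟨2*j - 1, by have := m.isLt; omega⟩) (ρbase j)

/-- `K`: the `ℚ[S_{4j−1}]`-submodule of `W = Λ^{2j} ℚ^{4j−1}` generated by `ρ`, i.e. the span
of the `S_{4j−1}`-orbit of `ρ`. -/
def Ksub (j : ℕ) : Submodule ℚ (ExteriorAlgebra ℚ (Fin (4*j-1) → ℚ)) :=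
  Submodule.span ℚ (Set.range fun g : Equiv.Perm (Fin (4*j-1)) => pact (4*j-1) g (ρElt j))

end

noncomputable section

/-- `e_{m+1}` as an element of the exterior algebra. -/
def E (j : ℕ) (m : Fin (4*j-1)) : ExteriorAlgebra ℚ (Fin (4*j-1) → ℚ) :=
  ExteriorAlgebra.ι ℚ (ε j m)

end

/-!
Write `σ = e₁ + ⋯ + e_{4j−1}`. Wedging `e_{2j+1} ∧ ⋯ ∧ e_{4j−1}` with `σ` kills every summand of `σ`
beyond `e_{2j}`, and what remains is `ρ`; as `σ` is invariant under permutations, `K` contains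
`σ ∧ x` for every `x` of degree `2j − 1`.

Put `d = (e₂ − e₁) ∧ (e₃ − e₁) = e₁ ∧ e₂ − e₁ ∧ e₃ + e₂ ∧ e₃`, let `ℓₖ` be the sum of the two basis
vectors of the `k`-th loop, so that `S = ℓ₁ ∧ ⋯ ∧ ℓ_{2j−2}` and `S_i` is the same product without
`ℓ_i`, and split `σ = (e₁ + e₂ + e₃) + ∑ ℓₖ`. The first part of `σ` sends `d` to
`3 e₁ ∧ e₂ ∧ e₃`, while in the second only `ℓ_i` survives against `S_i`. Hence
`∑ (−1)^{i−1} σ ∧ d ∧ S_i`, an element of `K`, is `(2j − 2) v − 3 w`.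
-/

open ExteriorAlgebra

lemma prod_ofFn_sum {A β : Type*} [Semiring A] {n : ℕ} (s : Fin n → Finset β)
    (f : Fin n → β → A) :
    (List.ofFn fun k => ∑ b ∈ s k, f k b).prod =
      ∑ c ∈ Fintype.piFinset s, (List.ofFn fun k => f k (c k)).prod := by
  classical
  simpa only [MultilinearMap.mkPiAlgebraFin_apply] using
    (MultilinearMap.mkPiAlgebraFin ℕ n A).map_sum_finset f s

lemma funLeft_inv_single {R α : Type*} [Semiring R] [DecidableEq α] (g : Equiv.Perm α) (m : α)
    (r : R) : LinearMap.funLeft R R ⇑g⁻¹ (Pi.single m r) = Pi.single (g m) r := by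
  ext x
  simp only [LinearMap.funLeft_apply, Pi.single_apply, Equiv.Perm.inv_eq_iff_eq]

section Exterior

variable {R M : Type*} [CommRing R] [AddCommGroup M] [Module R M] {n : ℕ}

lemma ι_mul_ι_swap (x y : M) : ι R x * ι R y = -(ι R y * ι R x) :=
  eq_neg_of_add_eq_zero_left (ι_add_mul_swap x y)

lemma ι_mul_ι_mul_ι_comm (x y z : M) : ι R x * (ι R y * ι R z) = ι R y * ι R z * ι R x := by
  rw [← mul_assoc, ι_mul_ι_swap x y, neg_mul, mul_assoc, ι_mul_ι_swap x z, mul_neg, neg_neg,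
    mul_assoc]

lemma ι_sub_mul_ι_sub (x y z : M) :
    ι R (y - x) * ι R (z - x) = ι R x * ι R y - ι R x * ι R z + ι R y * ι R z := by
  simp only [map_sub, sub_mul, mul_sub, ι_sq_zero, ι_mul_ι_swap y x]
  abel

lemma ι_mul_ι_sub_mul_ι_sub (x y z : M) :
    ι R x * (ι R (y - x) * ι R (z - x)) = ι R x * ι R y * ι R z := by
  simp only [ι_sub_mul_ι_sub, mul_add, mul_sub, ← mul_assoc, ι_sq_zero, zero_mul, sub_zero,
    zero_add]

lemma ι_add_add_mul_ι_sub_mul_ι_sub (x y z : M) :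
    ι R (x + y + z) * (ι R (y - x) * ι R (z - x)) = (3 : R) • (ι R x * ι R y * ι R z) := by
  have hsum : x + y + z = (3 : R) • x + (y - x) + (z - x) := by module
  have hy : ι R (y - x) * (ι R (y - x) * ι R (z - x)) = 0 := by
    rw [← mul_assoc, ι_sq_zero, zero_mul]
  have hz : ι R (z - x) * (ι R (y - x) * ι R (z - x)) = 0 := by
    rw [ι_mul_ι_mul_ι_comm, mul_assoc, ι_sq_zero, mul_zero]
  rw [hsum, map_add, map_add, add_mul, add_mul, hy, hz, add_zero, add_zero, map_smul,
    smul_mul_assoc, ι_mul_ι_sub_mul_ι_sub]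

variable (R) in
/-- The wedge product `u₀ ∧ u₁ ∧ ⋯ ∧ uₙ₋₁` with the factors indexed by `I` left out. The omitted
factors are replaced by `1`, so that the index type of the family does not change. -/
def wedgeOmit (u : Fin n → M) (I : Finset (Fin n)) : ExteriorAlgebra R M :=
  (List.ofFn fun k => if k ∈ I then 1 else ι R (u k)).prod

lemma wedgeOmit_empty (u : Fin n → M) : wedgeOmit R u ∅ = ιMulti R n u := by
  simp only [wedgeOmit, Finset.notMem_empty, if_false, ιMulti_apply]

lemma ι_mem_exteriorPower_one (x : M) : ι R x ∈ ⋀[R]^1 M :=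
  (pow_one (LinearMap.range (ι R : M →ₗ[R] ExteriorAlgebra R M))).ge (LinearMap.mem_range_self _ x)

lemma wedgeOmit_mem_exteriorPower (u : Fin n → M) (I : Finset (Fin n)) :
    wedgeOmit R u I ∈ ⋀[R]^(Iᶜ.card) M := by
  have hdeg : (List.ofFn fun k => if k ∈ I then 0 else 1).sum = Iᶜ.card := by
    simp only [List.sum_ofFn, ← Finset.mem_compl, ← ite_not (_ ∈ I), Finset.sum_boole,
      Finset.filter_univ_mem, Nat.cast_id]
  rw [← hdeg]
  refine SetLike.list_prod_ofFn_mem_graded _ _ fun k => ?_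
  split_ifs
  · exact SetLike.GradedOne.one_mem
  · exact ι_mem_exteriorPower_one _

lemma ι_mul_ι_mul_wedgeOmit_singleton_mem_exteriorPower (x y : M) (u : Fin n → M) (i : Fin n) :
    ι R x * ι R y * wedgeOmit R u {i} ∈ ⋀[R]^(n + 1) M := by
  have hdeg : n + 1 = 1 + 1 + ({i}ᶜ : Finset (Fin n)).card := by
    have := i.pos
    rw [Finset.card_compl, Fintype.card_fin, Finset.card_singleton]
    omega
  rw [hdeg]
  exact SetLike.mul_mem_graded
    (SetLike.mul_mem_graded (ι_mem_exteriorPower_one x) (ι_mem_exteriorPower_one y))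
    (wedgeOmit_mem_exteriorPower u {i})

lemma wedgeOmit_singleton_succ (u : Fin (n + 1) → M) (i : Fin n) :
    wedgeOmit R u {i.succ} = ι R (u 0) * wedgeOmit R (Fin.tail u) {i} := by
  simp [wedgeOmit, List.ofFn_succ, (Fin.succ_ne_zero _).symm, Fin.tail]

lemma ι_mul_wedgeOmit_singleton (x : M) (u : Fin n → M) (i : Fin n) :
    ι R x * wedgeOmit R u {i} = (-1 : R) ^ (i : ℕ) • ιMulti R n (Function.update u i x) := by
  induction n with
  | zero => exact i.elim0
  | succ n ih =>
    cases i using Fin.cases with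
    | zero => simp [wedgeOmit, ιMulti_apply, List.ofFn_succ, Matrix.vecTail]
    | succ i =>
      rw [wedgeOmit_singleton_succ, ← mul_assoc, ι_mul_ι_swap, neg_mul, mul_assoc, ih,
        ← Fin.tail_update_succ, mul_smul_comm, Fin.val_succ, pow_succ, mul_neg_one, neg_smul,
        ιMulti_succ_apply, Function.update_of_ne (Fin.succ_ne_zero i).symm]
      rfl

lemma ι_sum_mul_wedgeOmit_singleton (u : Fin n → M) (i : Fin n) :
    ι R (∑ k, u k) * wedgeOmit R u {i} = (-1 : R) ^ (i : ℕ) • wedgeOmit R u ∅ := by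
  rw [map_sum, Finset.sum_mul, Fintype.sum_eq_single i fun k hk => ?_]
  · rw [ι_mul_wedgeOmit_singleton, Function.update_eq_self, wedgeOmit_empty]
  · rw [ι_mul_wedgeOmit_singleton, AlternatingMap.map_update_self _ _ hk.symm, smul_zero]

lemma ι_add_sum_mul_wedgeOmit_singleton (x y z : M) (u : Fin n → M) (i : Fin n) :
    ι R (x + y + z + ∑ k, u k) * (ι R (y - x) * ι R (z - x) * wedgeOmit R u {i}) =
      (3 : R) • (ι R x * ι R y * ι R z * wedgeOmit R u {i}) +
        (-1 : R) ^ (i : ℕ) • (ι R (y - x) * ι R (z - x) * wedgeOmit R u ∅) := by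
  rw [map_add, add_mul, ← mul_assoc, ι_add_add_mul_ι_sub_mul_ι_sub, smul_mul_assoc, ← mul_assoc,
    ι_mul_ι_mul_ι_comm, mul_assoc _ (ι R (∑ k, u k)), ι_sum_mul_wedgeOmit_singleton, mul_smul_comm]

theorem ι_mul_sum_wedgeOmit_singleton (x y z : M) (u : Fin n → M) :
    ι R (x + y + z + ∑ k, u k) *
        ∑ i : Fin n, (-1 : R) ^ (i : ℕ) • (ι R (y - x) * ι R (z - x) * wedgeOmit R u {i}) =
      (n : R) • ((ι R x * ι R y - ι R x * ι R z + ι R y * ι R z) * wedgeOmit R u ∅) -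
        (3 : R) • ∑ i : Fin n,
          (-1 : R) ^ ((i : ℕ) + 1) • (ι R x * ι R y * ι R z * wedgeOmit R u {i}) := by
  have hterm (i : Fin n) :
      ι R (x + y + z + ∑ k, u k) *
          ((-1 : R) ^ (i : ℕ) • (ι R (y - x) * ι R (z - x) * wedgeOmit R u {i})) =
        ι R (y - x) * ι R (z - x) * wedgeOmit R u ∅ -
          (3 : R) • (-1 : R) ^ ((i : ℕ) + 1) • (ι R x * ι R y * ι R z * wedgeOmit R u {i}) := by
    have hsign : (-1 : R) ^ (i : ℕ) * (-1) ^ (i : ℕ) = 1 := by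
      rw [← mul_pow, neg_one_mul, neg_neg, one_pow]
    rw [mul_smul_comm, ι_add_sum_mul_wedgeOmit_singleton, smul_add,
      smul_smul _ _ (_ * wedgeOmit R u ∅), hsign, pow_succ]
    module
  rw [Finset.mul_sum, Finset.sum_congr rfl fun i _ => hterm i, Finset.sum_sub_distrib,
    Finset.sum_const, Finset.card_univ, Fintype.card_fin, ← Nat.cast_smul_eq_nsmul R,
    Finset.smul_sum, ι_sub_mul_ι_sub]

end Exterior

section Permutation

variable {N n : ℕ}

lemma pact_mul (g : Equiv.Perm (Fin N)) (x y : ExteriorAlgebra ℚ (Fin N → ℚ)) :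
    pact N g (x * y) = pact N g x * pact N g y :=
  map_mul (ExteriorAlgebra.map _) x y

lemma pact_ι_single (g : Equiv.Perm (Fin N)) (m : Fin N) :
    pact N g (ι ℚ (Pi.single m 1)) = ι ℚ (Pi.single (g m) 1) := by
  rw [pact, AlgHom.toLinearMap_apply, map_apply_ι, funLeft_inv_single]

lemma pact_ι_one (g : Equiv.Perm (Fin N)) : pact N g (ι ℚ 1) = ι ℚ 1 :=
  map_apply_ι _ _

lemma pact_ιMulti_single (g : Equiv.Perm (Fin N)) (s : Fin n → Fin N) :
    pact N g (ιMulti ℚ n fun k => Pi.single (s k) 1) =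
      ιMulti ℚ n fun k => Pi.single (g (s k)) 1 := by
  rw [pact, AlgHom.toLinearMap_apply, map_apply_ιMulti]
  simp only [Function.comp_def, funLeft_inv_single]

lemma ι_one_mul_mem_span_pact (t : Fin n ↪ Fin N) {x : ExteriorAlgebra ℚ (Fin N → ℚ)}
    (hx : x ∈ ⋀[ℚ]^n (Fin N → ℚ)) :
    ι ℚ 1 * x ∈ Submodule.span ℚ (Set.range fun g : Equiv.Perm (Fin N) =>
      pact N g (ι ℚ 1 * ιMulti ℚ n fun k => Pi.single (t k) 1)) := by
  rw [← exteriorPower.ιMulti_family_span_fixedDegree_of_span ℚ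
    (Pi.basisFun ℚ (Fin N)).span_eq] at hx
  induction hx using Submodule.span_induction with
  | mem x hx =>
    obtain ⟨s, rfl⟩ := hx
    obtain ⟨g, hg⟩ := (Equiv.Perm.isMultiplyPretransitive (Fin N) n).exists_smul_eq t
      (Set.powersetCard.ofFinEmbEquiv.symm s).toEmbedding
    refine Submodule.subset_span ⟨g, ?_⟩
    have hgt (k : Fin n) : g (t k) = Set.powersetCard.ofFinEmbEquiv.symm s k :=
      DFunLike.congr_fun hg k
    simp [pact_mul, pact_ι_one, pact_ιMulti_single, hgt, ιMulti_family, Function.comp_def]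
  | zero => simp
  | add x y _ _ hx hy => simpa only [mul_add] using add_mem hx hy
  | smul a x _ hx => simpa only [mul_smul_comm] using Submodule.smul_mem _ a hx

end Permutation

section Rho

/-- The indices `2j + 1, …, 4j − 1` of the basis vectors common to all summands of `ρ`
(`0`-based: `2j, …, 4j − 2`). -/
def tailEmb (j : ℕ) : Fin (2 * j - 1) ↪ Fin (4 * j - 1) :=
  ⟨fun k => ⟨2 * j + k, by omega⟩, fun a b h => by simpa [Fin.ext_iff] using h⟩

lemma val_tailEmb (j : ℕ) (k : Fin (2 * j - 1)) : (tailEmb j k : ℕ) = 2 * j + k := rfl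

/-- The wedge `e_{2j+1} ∧ ⋯ ∧ e_{4j−1}` common to all summands of `ρ`. -/
def tailWedge (j : ℕ) : ExteriorAlgebra ℚ (Fin (4 * j - 1) → ℚ) :=
  ιMulti ℚ (2 * j - 1) fun k => Pi.single (tailEmb j k) 1

variable {j : ℕ}

lemma ρbase_eq (hj : 0 < j) : ρbase j = ι ℚ (Pi.single ⟨2 * j - 1, by omega⟩ 1) * tailWedge j := by
  rw [ρbase, tailWedge, ιMulti_apply, List.ofFn_congr (by omega : 2 * j = 2 * j - 1 + 1),
    List.ofFn_succ, List.prod_cons]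
  congr! 6 with k
  refine congrArg (Pi.single · (1 : ℚ)) (Fin.ext ?_)
  simp only [val_tailEmb, Fin.val_cast, Fin.val_succ]
  omega

lemma ι_single_mul_tailWedge (m : Fin (4 * j - 1)) (hm : 2 * j ≤ m) :
    ι ℚ (Pi.single m 1) * tailWedge j = 0 := by
  obtain ⟨k, rfl⟩ : ∃ k, tailEmb j k = m :=
    ⟨⟨m - 2 * j, by omega⟩, Fin.ext (Nat.add_sub_of_le hm)⟩
  rw [tailWedge, ιMulti_apply]
  exact ι_mul_prod_list (fun k => Pi.single (tailEmb j k) 1) k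

lemma pact_swap_ρbase (hj : 0 < j) (m : Fin (4 * j - 1)) (hm : m < 2 * j) :
    pact (4 * j - 1) (Equiv.swap m ⟨2 * j - 1, by omega⟩) (ρbase j) =
      ι ℚ (Pi.single m 1) * tailWedge j := by
  have hfix (k : Fin (2 * j - 1)) :
      Equiv.swap m ⟨2 * j - 1, by omega⟩ (tailEmb j k) = tailEmb j k := by
    apply Equiv.swap_apply_of_ne_of_ne <;> simp only [ne_eq, Fin.ext_iff, val_tailEmb] <;> omega
  simp only [ρbase_eq hj, pact_mul, pact_ι_single, Equiv.swap_apply_right, tailWedge,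
    pact_ιMulti_single, hfix]

lemma ρElt_eq (hj : 0 < j) : ρElt j = ι ℚ 1 * tailWedge j := by
  rw [← Finset.univ_sum_single (1 : Fin (4 * j - 1) → ℚ), map_sum, Finset.sum_mul]
  let low : Fin (2 * j - 1 + 1) → Fin (4 * j - 1) := Fin.castLE (by omega)
  rw [← Fintype.sum_of_injective low (Fin.castLE_injective _)
    (fun m => ι ℚ (Pi.single (low m) 1) * tailWedge j) _ (fun m hm => ?_) fun _ => rfl]
  · rw [Fin.sum_univ_castSucc, add_comm]
    exact congrArg₂ _ (ρbase_eq hj) <| Finset.sum_congr rfl fun m _ =>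
      pact_swap_ρbase hj (low m.castSucc) (show (m : ℕ) < 2 * j by omega)
  · refine ι_single_mul_tailWedge m ?_
    by_contra! hlt
    exact hm ⟨⟨m, by omega⟩, rfl⟩

lemma ι_one_mul_mem_Ksub (hj : 0 < j) {x : ExteriorAlgebra ℚ (Fin (4 * j - 1) → ℚ)}
    (hx : x ∈ ⋀[ℚ]^(2 * j - 1) (Fin (4 * j - 1) → ℚ)) : ι ℚ 1 * x ∈ Ksub j := by
  rw [Ksub, ρElt_eq hj]
  exact ι_one_mul_mem_span_pact (tailEmb j) hx

end Rho

section Loops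

variable {j : ℕ}

/-- The sum of the two basis vectors of the loop `B_k`. -/
def loopSum (j : ℕ) (k : Fin (2 * j - 2)) : Fin (4 * j - 1) → ℚ :=
  ε j (idx j k false) + ε j (idx j k true)

lemma SI_eq_wedgeOmit (I : Finset (Fin (2 * j - 2))) : SI j I = wedgeOmit ℚ (loopSum j) I := by
  let choices (k : Fin (2 * j - 2)) : Finset Bool := if k ∈ I then {false} else Finset.univ
  have hchoices : Finset.univ.filter (fun c : Fin (2 * j - 2) → Bool => ∀ i ∈ I, c i = false) =
      Fintype.piFinset choices := by
    ext c
    simp only [Finset.mem_filter_univ, Fintype.mem_piFinset, choices]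
    refine forall_congr' fun k => ?_
    split_ifs with hk <;> simp [hk]
  rw [SI, hchoices, ← prod_ofFn_sum choices fun k b => if k ∈ I then 1 else ι ℚ (ε j (idx j k b)),
    wedgeOmit]
  congr! 3 with k
  by_cases hk : k ∈ I <;> simp [choices, hk, loopSum, add_comm]

lemma idx_inj {k l : Fin (2 * j - 2)} {b c : Bool} : idx j k b = idx j l c ↔ k = l ∧ b = c := by
  cases b <;> cases c <;> grind [idx]

lemma ε_add_ε_add_ε_add_sum_loopSum (hj : 0 < j) :
    ε j ⟨0, by omega⟩ + ε j ⟨1, by omega⟩ + ε j ⟨2, by omega⟩ + ∑ k, loopSum j k = 1 := by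
  let index : Fin 3 ⊕ Fin (2 * j - 2) × Bool → Fin (4 * j - 1) :=
    Sum.elim (Fin.castLE (by omega)) fun p => idx j p.1 p.2
  have hindex : Function.Bijective index := by
    have hcard : Fintype.card (Fin 3 ⊕ Fin (2 * j - 2) × Bool) =
        Fintype.card (Fin (4 * j - 1)) := by
      simp only [Fintype.card_sum, Fintype.card_prod, Fintype.card_fin, Fintype.card_bool]
      omega
    refine (Fintype.bijective_iff_injective_and_card index).2 ⟨?_, hcard⟩
    rintro (a | ⟨k, b⟩) (c | ⟨l, d⟩) h <;>
      simp only [index, Sum.elim_inl, Sum.elim_inr, idx_inj] at h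
    · rw [Fin.castLE_injective _ h]
    · simp only [idx, Fin.ext_iff, Fin.val_castLE] at h
      omega
    · simp only [idx, Fin.ext_iff, Fin.val_castLE] at h
      omega
    · rw [h.1, h.2]
  calc
    _ = ∑ p, ε j (index p) := by
      simp only [Fintype.sum_sum_type, Fintype.sum_prod_type, Fin.sum_univ_three, Fintype.sum_bool,
        index, Sum.elim_inl, Sum.elim_inr, loopSum, add_comm (ε j (idx j _ true))]
      rfl
    _ = ∑ m, ε j m := hindex.sum_comp _
    _ = 1 := Finset.univ_sum_single 1

end Loops

/-- For `j ≥ 2`, with `v = (e₁∧e₂ − e₁∧e₃ + e₂∧e₃) ∧ S` and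
`w = ∑_{i=1}^{2j−2} (−1)^i e₁∧e₂∧e₃∧S_i`, the vector `(2j−2)·v − 3·w` lies in `K`. -/
theorem stmt10 (j : ℕ) (hj : 2 ≤ j) :
    ((2*j - 2 : ℕ) : ℚ) •
        ((E j ⟨0, by omega⟩ * E j ⟨1, by omega⟩ - E j ⟨0, by omega⟩ * E j ⟨2, by omega⟩
            + E j ⟨1, by omega⟩ * E j ⟨2, by omega⟩) * SI j ∅)
      - (3 : ℚ) • (∑ i : Fin (2*j-2), ((-1 : ℚ)^((i : ℕ)+1)) •
          (E j ⟨0, by omega⟩ * E j ⟨1, by omega⟩ * E j ⟨2, by omega⟩ * SI j {i}))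
      ∈ Ksub j := by
  have hj0 : 0 < j := by omega
  have hdeg : 2 * j - 2 + 1 = 2 * j - 1 := by omega
  have hmem : ι ℚ 1 * ∑ i : Fin (2 * j - 2), (-1 : ℚ) ^ (i : ℕ) •
      (ι ℚ (ε j ⟨1, by omega⟩ - ε j ⟨0, by omega⟩) * ι ℚ (ε j ⟨2, by omega⟩ - ε j ⟨0, by omega⟩) *
        wedgeOmit ℚ (loopSum j) {i}) ∈ Ksub j :=
    ι_one_mul_mem_Ksub hj0 <| sum_mem fun i _ => Submodule.smul_mem _ _ <|
      hdeg ▸ ι_mul_ι_mul_wedgeOmit_singleton_mem_exteriorPower _ _ (loopSum j) i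
  rw [← ε_add_ε_add_ε_add_sum_loopSum hj0, ι_mul_sum_wedgeOmit_singleton] at hmem
  simpa only [E, SI_eq_wedgeOmit] using hmem
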